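/- arXiv:1207.2008 — 3 statements merged into one kernel-verified Lean document; each statement's English description precedes it below -/
import Mathlib

section
/- For every real number x and every real t with |t| < π/2, the series 1 + Σ_{n≥1} A^{(1,0,∅,0)}_{2n}(x) · t^{2n}/(2n)! converges and its sum equals (sec t)^x = (cos t)^{−x}. -/
/-- A permutation `σ` of `{1,…,n}` (as a permutation of `Fin n`) is up-down if
`σ_1 < σ_2 > σ_3 < σ_4 > ⋯`. -/
def UpDown {n : ℕ} (σ : Equiv.Perm (Fin n)) : Prop :=
  ∀ i : Fin n, ∀ h : i.val + 1 < n,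
    if Even i.val then σ i < σ ⟨i.val + 1, h⟩ else σ ⟨i.val + 1, h⟩ < σ i

/-- A permutation is down-up if `σ_1 > σ_2 < σ_3 > σ_4 < ⋯`. -/
def DownUp {n : ℕ} (σ : Equiv.Perm (Fin n)) : Prop :=
  ∀ i : Fin n, ∀ h : i.val + 1 < n,
    if Even i.val then σ ⟨i.val + 1, h⟩ < σ i else σ i < σ ⟨i.val + 1, h⟩

/-- `σ_i` matches `MMP(1,0,∅,0)`: there exists `j > i` with `σ_j > σ_i` and
there is no `j < i` with `σ_j < σ_i`. -/
def Matches1 {n : ℕ} (σ : Equiv.Perm (Fin n)) (i : Fin n) : Prop :=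
  (∃ j, i < j ∧ σ i < σ j) ∧ ¬ ∃ j, j < i ∧ σ j < σ i

/-- `mmp^{(1,0,∅,0)}(σ)`: the number of indices matching `MMP(1,0,∅,0)` in `σ`. -/
noncomputable def mmp1 {n : ℕ} (σ : Equiv.Perm (Fin n)) : ℕ :=
  {i : Fin n | Matches1 σ i}.ncard

open scoped Classical in
/-- `A^{(1,0,∅,0)}_{2n}(x) = Σ_{σ ∈ UD_{2n}} x^{mmp^{(1,0,∅,0)}(σ)}`. -/
noncomputable def Apoly (n : ℕ) (x : ℝ) : ℝ :=
  ∑ σ : Equiv.Perm (Fin (2*n)), if UpDown σ then x ^ mmp1 σ else 0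

/-!
In an up-down permutation of even length every left-to-right minimum stands at an ascent, so `mmp1`
counts left-to-right minima. Cut a permutation which is up-down on its first `2k` entries and
increasing afterwards into the set of the first `2k` values, their pattern, and the increasing
remainder; the remainder contributes a left-to-right minimum exactly when it contains the smallest
value. Such permutations have descents at `1, 3, …, 2k - 3` and possibly at `2k - 1`, so the
product that counts them is a sum of two consecutive terms of a sequence, and the alternating sum
of these products telescopes. The resulting recurrence determines the coefficients of the solution
of `y' cos t = x y sin t`, `y(0) = 1`. By Leibniz' rule the Taylor coefficients of `(cos z)⁻ˣ`,
which is holomorphic and even on the disc `|z| < π / 2`, satisfy the same recurrence, and the Taylor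
series converges on that disc.
-/

open Finset Equiv

section Descents

variable {n : ℕ} {σ : Perm (Fin n)}

/-- The descent set of `σ`. Positions are counted from `0` and form a set of natural numbers, so
that descent sets of permutations of different lengths can be compared. -/
def descents (σ : Perm (Fin n)) : Set ℕ :=
  {i | ∃ h : i + 1 < n, σ ⟨i + 1, h⟩ < σ ⟨i, by omega⟩}

lemma mem_descents_iff {i : ℕ} (h : i + 1 < n) :
    i ∈ descents σ ↔ σ ⟨i + 1, h⟩ < σ ⟨i, by omega⟩ :=
  ⟨fun ⟨_, hi⟩ => hi, fun hi => ⟨h, hi⟩⟩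

lemma notMem_descents_iff {i : ℕ} (h : i + 1 < n) :
    i ∉ descents σ ↔ σ ⟨i, by omega⟩ < σ ⟨i + 1, h⟩ := by
  rw [mem_descents_iff h, not_lt, le_iff_lt_or_eq, or_iff_left]
  exact fun e => by simpa using σ.injective e

lemma upDown_iff_descents_eq : UpDown σ ↔ descents σ = {i | Odd i ∧ i + 1 < n} := by
  have descents_eq_iff : descents σ = {i | Odd i ∧ i + 1 < n} ↔
      ∀ i, i + 1 < n → (i ∈ descents σ ↔ ¬ Even i) := by
    refine Set.ext_iff.trans (forall_congr' fun i => ?_)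
    simp only [Set.mem_ofPred_eq, Nat.not_even_iff_odd]
    exact ⟨fun h hi => by simp [h, hi],
      fun h => ⟨fun hi => ⟨(h hi.1).1 hi, hi.1⟩, fun hi => (h hi.2).2 hi.1⟩⟩
  rw [descents_eq_iff]
  constructor
  · intro hσ i hi
    have := hσ ⟨i, by omega⟩ hi
    split_ifs at this with hp
    · simpa [hp] using (notMem_descents_iff hi).2 this
    · simpa [hp] using (mem_descents_iff hi).2 this
  · intro hσ i hi
    split_ifs with hp
    · exact (notMem_descents_iff hi).1 fun h => (hσ i hi).1 h hp
    · exact (mem_descents_iff hi).1 ((hσ i hi).2 hp)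

/-- The positions of the left-to-right minima of `σ`. -/
def leftToRightMinima (σ : Perm (Fin n)) : Finset (Fin n) :=
  {i | ∀ j < i, σ i < σ j}

lemma mem_leftToRightMinima {i : Fin n} : i ∈ leftToRightMinima σ ↔ ∀ j < i, σ i < σ j := by
  simp [leftToRightMinima]

lemma UpDown.even_of_mem_leftToRightMinima (hσ : UpDown σ) {i : Fin n}
    (hi : i ∈ leftToRightMinima σ) : Even i.val := by
  by_contra hodd
  obtain ⟨k, hk⟩ := Nat.not_even_iff_odd.1 hodd
  have ascent := hσ ⟨2 * k, by omega⟩ (by simp only; omega)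
  rw [if_pos (even_two_mul k)] at ascent
  have hi_eq : i = ⟨2 * k + 1, by omega⟩ := Fin.ext hk
  exact lt_asymm ascent (hi_eq ▸ mem_leftToRightMinima.1 hi ⟨2 * k, by omega⟩
    (by rw [Fin.lt_def]; simp only; omega))

lemma UpDown.mmp1_eq_card_leftToRightMinima (hn : Even n) (hσ : UpDown σ) :
    mmp1 σ = #(leftToRightMinima σ) := by
  have not_exists_iff (i : Fin n) : (¬ ∃ j, j < i ∧ σ j < σ i) ↔ i ∈ leftToRightMinima σ := by
    simp only [mem_leftToRightMinima, not_exists, not_and, not_lt]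
    exact forall₂_congr fun j hj => (σ.injective.ne hj.ne').le_iff_lt
  rw [mmp1, ← Set.ncard_coe_finset]
  congr 1
  ext i
  simp only [Set.mem_ofPred_eq, Matches1, not_exists_iff, mem_coe]
  refine and_iff_right_of_imp fun hi => ?_
  have hi_even := hσ.even_of_mem_leftToRightMinima hi
  have hi_succ : i.val + 1 < n := by grind
  exact ⟨⟨i + 1, hi_succ⟩, by simp [Fin.lt_def], by simpa [hi_even] using hσ i hi_succ⟩

end Descents

section AppendIncreasing

variable {a b : ℕ}

lemma card_compl_of_card_eq (T : {T : Finset (Fin (a + b)) // #T = a}) : #(T.1ᶜ) = b := by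
  simp [card_compl, T.2]

/-- The permutation of length `a + b` whose first `a` entries are the elements of `T`, in the
relative order of `σ`, and whose remaining `b` entries are increasing. -/
noncomputable def appendIncreasing (T : {T : Finset (Fin (a + b)) // #T = a})
    (σ : Perm (Fin a)) : Perm (Fin (a + b)) :=
  finSumFinEquiv.symm.trans ((sumCongr σ (Equiv.refl (Fin b))).trans
    (finSumEquivOfFinset T.2 (card_compl_of_card_eq T)))

variable (T : {T : Finset (Fin (a + b)) // #T = a}) (σ : Perm (Fin a))

lemma appendIncreasing_castAdd (i : Fin a) :
    appendIncreasing T σ (Fin.castAdd b i) = T.1.orderEmbOfFin T.2 (σ i) := by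
  simp [appendIncreasing]

lemma appendIncreasing_natAdd (i : Fin b) :
    appendIncreasing T σ (Fin.natAdd a i) =
      T.1ᶜ.orderEmbOfFin (card_compl_of_card_eq T) i := by
  simp [appendIncreasing]

lemma lt_of_mem_descents_appendIncreasing {i : ℕ}
    (hi : i ∈ descents (appendIncreasing T σ)) : i < a := by
  by_contra! ha
  obtain ⟨k, rfl⟩ := Nat.exists_eq_add_of_le ha
  obtain ⟨hk, hdescent⟩ := hi
  have entry := appendIncreasing_natAdd T σ
  have entry_fst := entry ⟨k, by omega⟩
  have entry_snd := entry ⟨k + 1, by omega⟩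
  simp only [Fin.natAdd_mk, ← add_assoc] at entry_fst entry_snd
  simp [entry_fst, entry_snd] at hdescent

lemma descents_appendIncreasing :
    descents (appendIncreasing T σ) \ {i | i + 1 = a} = descents σ := by
  ext i
  simp only [Set.mem_sdiff, Set.mem_ofPred_eq]
  rcases lt_or_ge (i + 1) a with hi | hi
  · have entry := appendIncreasing_castAdd T σ
    have entry_fst := entry ⟨i, by omega⟩
    have entry_snd := entry ⟨i + 1, hi⟩
    simp only [Fin.castAdd_mk] at entry_fst entry_snd
    rw [mem_descents_iff hi, mem_descents_iff (by omega)]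
    simp [entry_fst, entry_snd, hi.ne]
  · have right_false : i ∉ descents σ := fun ⟨h, _⟩ => by omega
    simp only [right_false, iff_false, not_and, not_not]
    intro h
    have := lt_of_mem_descents_appendIncreasing T σ h
    omega

lemma castAdd_mem_leftToRightMinima_appendIncreasing {i : Fin a} :
    Fin.castAdd b i ∈ leftToRightMinima (appendIncreasing T σ) ↔ i ∈ leftToRightMinima σ := by
  simp only [mem_leftToRightMinima]
  constructor
  · intro h j hj
    simpa [appendIncreasing_castAdd] using h (Fin.castAdd b j) hj
  · intro h j hj
    obtain ⟨j, rfl⟩ : ∃ j', j = Fin.castAdd b j' := ⟨⟨j, by grind⟩, rfl⟩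
    simpa [appendIncreasing_castAdd] using h j hj

lemma natAdd_mem_leftToRightMinima_appendIncreasing [NeZero (a + b)] {i : Fin b} :
    Fin.natAdd a i ∈ leftToRightMinima (appendIncreasing T σ) ↔
      appendIncreasing T σ (Fin.natAdd a i) = 0 := by
  set τ := appendIncreasing T σ
  rw [mem_leftToRightMinima]
  constructor
  · intro hmin
    obtain ⟨p, hp⟩ := τ.surjective 0
    induction p using Fin.addCases with
    | left p => exact absurd (hmin (Fin.castAdd b p) (by grind)) (by simp [hp])
    | right p =>
      rcases lt_or_ge p i with hpi | hpi
      · exact absurd (hmin (Fin.natAdd a p) (by simpa using hpi)) (by simp [hp])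
      · have hle : τ (Fin.natAdd a i) ≤ τ (Fin.natAdd a p) := by
          simpa [τ, appendIncreasing_natAdd] using hpi
        exact le_antisymm (hp ▸ hle) (Fin.zero_le _)
  · intro hzero j hj
    rw [hzero, Fin.pos_iff_ne_zero, ← hzero]
    exact τ.injective.ne hj.ne

lemma card_leftToRightMinima_appendIncreasing [NeZero (a + b)] :
    #(leftToRightMinima (appendIncreasing T σ)) =
      #(leftToRightMinima σ) + if 0 ∈ T.1 then 0 else 1 := by
  have suffix_count : #{i : Fin b | appendIncreasing T σ (Fin.natAdd a i) = 0} =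
      if 0 ∈ T.1 then 0 else 1 := by
    have hrange : 0 ∈ Set.range (T.1ᶜ.orderEmbOfFin (card_compl_of_card_eq T)) ↔ 0 ∉ T.1 := by
      simp
    simp only [appendIncreasing_natAdd]
    split_ifs with h0
    · rw [card_eq_zero, filter_eq_empty_iff]
      exact fun i _ hi => hrange.1 ⟨i, hi⟩ h0
    · obtain ⟨i₀, hi₀⟩ := hrange.2 h0
      simp [← hi₀, filter_eq']
  rw [← suffix_count, ← filter_univ_mem (leftToRightMinima _), card_filter, Fin.sum_univ_add]
  simp only [castAdd_mem_leftToRightMinima_appendIncreasing,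
    natAdd_mem_leftToRightMinima_appendIncreasing, ← card_filter, filter_univ_mem]

lemma image_appendIncreasing_castAdd :
    univ.image (fun i : Fin a => appendIncreasing T σ (Fin.castAdd b i)) = T.1 := by
  simp_rw [appendIncreasing_castAdd]
  change univ.image (T.1.orderEmbOfFin T.2 ∘ σ) = T.1
  rw [← image_image, image_univ_equiv, image_orderEmbOfFin_univ]

lemma appendIncreasing_injective :
    Function.Injective fun p : {T : Finset (Fin (a + b)) // #T = a} × Perm (Fin a) =>
      appendIncreasing p.1 p.2 := by
  rintro ⟨T, σ⟩ ⟨T', σ'⟩ (h : appendIncreasing T σ = appendIncreasing T' σ')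
  obtain rfl : T = T' := Subtype.ext <| by
    rw [← image_appendIncreasing_castAdd T σ, h, image_appendIncreasing_castAdd]
  have hσ (i : Fin a) : σ i = σ' i := by
    have := DFunLike.congr_fun h (Fin.castAdd b i)
    simpa only [appendIncreasing_castAdd, EmbeddingLike.apply_eq_iff_eq] using this
  rw [Equiv.ext hσ]

lemma strictMono_natAdd_of_descents_subset {τ : Perm (Fin (a + b))}
    (hτ : descents τ ⊆ Set.Iio a) : StrictMono fun i : Fin b => τ (Fin.natAdd a i) := by
  rcases b with _ | b
  · exact fun i => i.elim0
  · refine Fin.strictMono_iff_lt_succ.2 fun i => ?_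
    exact (notMem_descents_iff (i := a + i) (by omega)).1 fun h => by simpa using hτ h

lemma exists_appendIncreasing_eq {τ : Perm (Fin (a + b))} (hτ : descents τ ⊆ Set.Iio a) :
    ∃ T : {T : Finset (Fin (a + b)) // #T = a}, ∃ σ, appendIncreasing T σ = τ := by
  have prefix_injective : Function.Injective fun i : Fin a => τ (Fin.castAdd b i) :=
    τ.injective.comp (Fin.castAdd_injective a b)
  let T : {T : Finset (Fin (a + b)) // #T = a} :=
    ⟨univ.image fun i : Fin a => τ (Fin.castAdd b i),
      by rw [card_image_of_injective _ prefix_injective, card_fin]⟩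
  have prefix_mem (i : Fin a) : τ (Fin.castAdd b i) ∈ T.1 := mem_image_of_mem _ (mem_univ i)
  let rank (i : Fin a) : Fin a := (T.1.orderIsoOfFin T.2).symm ⟨_, prefix_mem i⟩
  have rank_injective : Function.Injective rank := fun i j h =>
    prefix_injective (congrArg Subtype.val ((T.1.orderIsoOfFin T.2).symm.injective h))
  refine ⟨T, Equiv.ofBijective rank (Finite.injective_iff_bijective.1 rank_injective), ?_⟩
  ext1 i
  induction i using Fin.addCases with
  | left i =>
    rw [appendIncreasing_castAdd, ofBijective_apply, ← coe_orderIsoOfFin_apply]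
    simp [rank]
  | right i =>
    have suffix_mem (i : Fin b) : τ (Fin.natAdd a i) ∈ T.1ᶜ := by
      simp only [T, mem_compl, mem_image, mem_univ, true_and, not_exists]
      exact fun j h => by grind [congrArg Fin.val (τ.injective h)]
    rw [appendIncreasing_natAdd, ← orderEmbOfFin_unique (card_compl_of_card_eq T) suffix_mem
      (strictMono_natAdd_of_descents_subset hτ)]

end AppendIncreasing

section DescentPoly

variable {R : Type*} [CommSemiring R]

open scoped Classical in
/-- The generating polynomial, evaluated at `x`, of left-to-right minima over the permutations of
length `n` with descent set `D`. -/
noncomputable def descentPoly (n : ℕ) (D : Set ℕ) (x : R) : R :=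
  ∑ σ : Perm (Fin n) with descents σ = D, x ^ #(leftToRightMinima σ)

lemma sum_powersetCard_insert_ite {α : Type*} [DecidableEq α] {s : Finset α}
    {e : α} (he : e ∉ s) (m : ℕ) (x : R) :
    ∑ T ∈ powersetCard (m + 1) (insert e s), (if e ∈ T then 1 else x) =
      (#s).choose m + x * (#s).choose (m + 1) := by
  have notMem_of_mem {T : Finset α} {k : ℕ} (hT : T ∈ powersetCard k s) : e ∉ T :=
    fun h => he ((mem_powersetCard.1 hT).1 h)
  have insert_injOn : Set.InjOn (insert e) (powersetCard m s : Set (Finset α)) :=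
    fun T hT T' hT' h => by
      rw [← erase_insert (notMem_of_mem hT), h, erase_insert (notMem_of_mem hT')]
  have hdisj : Disjoint (powersetCard (m + 1) s) ((powersetCard m s).image (insert e)) := by
    rw [disjoint_left]
    rintro _ hT hT'
    obtain ⟨T, -, rfl⟩ := mem_image.1 hT'
    exact notMem_of_mem hT (mem_insert_self e T)
  rw [powersetCard_succ_insert he, sum_union hdisj, sum_image insert_injOn,
    sum_congr rfl fun T hT => if_neg (notMem_of_mem hT)]
  simp [add_comm, mul_comm]

open scoped Classical in
lemma sum_pow_card_leftToRightMinima_eq_mul_descentPoly {n a : ℕ} [NeZero n]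
    (ha : a ≤ n) {D : Set ℕ} (hD : ∀ i ∈ D, i + 1 < a) (x : R) :
    ∑ τ : Perm (Fin n) with descents τ \ {i | i + 1 = a} = D, x ^ #(leftToRightMinima τ) =
      (∑ T ∈ powersetCard a (univ : Finset (Fin n)), if 0 ∈ T then 1 else x) *
        descentPoly a D x := by
  obtain ⟨b, rfl⟩ := Nat.exists_eq_add_of_le ha
  rw [descentPoly, sum_subtype _ (p := fun T => #T = a) (F := inferInstance) (by simp),
    sum_mul_sum, ← sum_product']
  symm
  refine sum_nbij (fun p => appendIncreasing p.1 p.2) ?_ appendIncreasing_injective.injOn ?_ ?_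
  · rintro ⟨T, σ⟩ hσ
    simpa [descents_appendIncreasing] using hσ
  · rintro τ hτ
    replace hτ : descents τ \ {i | i + 1 = a} = D := by simpa using hτ
    have descents_subset : descents τ ⊆ Set.Iio a := by
      intro i hi
      by_contra hia
      have := hD i (hτ ▸ ⟨hi, by grind⟩)
      grind
    obtain ⟨T, σ, rfl⟩ := exists_appendIncreasing_eq descents_subset
    exact ⟨(T, σ), by simpa [descents_appendIncreasing] using hτ, rfl⟩
  · rintro ⟨T, σ⟩ -
    rw [card_leftToRightMinima_appendIncreasing]
    split_ifs <;> simp [pow_succ']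

lemma descentPoly_zero_empty (x : R) : descentPoly 0 ∅ x = 1 := by
  have descents_empty (σ : Perm (Fin 0)) : descents σ = ∅ := by
    simp [descents]
  simp [descentPoly, descents_empty, leftToRightMinima]

lemma descentPoly_empty (n : ℕ) [NeZero n] (x : R) :
    descentPoly n ∅ x = x := by
  have h := sum_pow_card_leftToRightMinima_eq_mul_descentPoly n.zero_le
    (D := ∅) (by simp) x
  simpa [descentPoly_zero_empty, ← descentPoly.eq_def] using h

lemma descentPoly_eq_zero {n i : ℕ} {D : Set ℕ} (hi : i ∈ D) (hn : n ≤ i + 1)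
    (x : R) : descentPoly n D x = 0 := by
  refine sum_eq_zero fun σ hσ => ?_
  obtain ⟨h, -⟩ : i ∈ descents σ := (mem_filter.1 hσ).2 ▸ hi
  omega

lemma descentPoly_add_descentPoly_insert {n m : ℕ} (hm : m ≤ n) {D : Set ℕ}
    (hD : D ⊆ Set.Iio m) (x : R) :
    descentPoly (n + 1) D x + descentPoly (n + 1) (insert m D) x =
      (n.choose m + x * n.choose (m + 1)) * descentPoly (m + 1) D x := by
  classical
  have hmD : m ∉ D := fun h => lt_irrefl m (hD h)
  have diff_eq_iff (S : Set ℕ) : S \ {i | i + 1 = m + 1} = D ↔ S = D ∨ S = insert m D := by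
    have : {i | i + 1 = m + 1} = {m} := by ext; simp
    rw [this]
    constructor
    · rintro rfl
      by_cases hmS : m ∈ S
      · exact Or.inr (by simp [hmS])
      · exact Or.inl (by simp [hmS])
    · rintro (rfl | rfl) <;> simp [hmD]
  have hdisj : Disjoint (α := Finset (Perm (Fin (n + 1)))) {σ | descents σ = D}
      {σ | descents σ = insert m D} :=
    disjoint_filter.2 fun σ _ h h' => hmD (h ▸ h' ▸ Set.mem_insert m D)
  have univ_eq : (univ : Finset (Fin (n + 1))) = insert 0 {0}ᶜ := by simp
  have h := sum_pow_card_leftToRightMinima_eq_mul_descentPoly (a := m + 1) (Nat.succ_le_succ hm)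
    (fun i hi => Nat.succ_lt_succ (hD hi)) x
  rw [univ_eq, sum_powersetCard_insert_ite (by simp), card_compl, Fintype.card_fin,
    card_singleton, Nat.succ_sub_one] at h
  rw [← h, descentPoly, descentPoly, ← sum_union hdisj, ← filter_or]
  simp only [diff_eq_iff]

end DescentPoly

section Recurrence

variable {R : Type*}

/-- The recurrence for the coefficients of a solution `y = ∑ aₙ t²ⁿ / (2n)!` of
`y' cos t = x y sin t`, `y(0) = 1`, that is, of `y = (sec t)ˣ`. -/
structure IsSecantPowerSeq [CommRing R] (x : R) (a : ℕ → R) : Prop where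
  zero : a 0 = 1
  recurrence (M : ℕ) :
    ∑ k ∈ range (M + 1), (-1) ^ k * (2 * M + 1).choose (2 * k + 1) * a (k + 1) =
      x * ∑ k ∈ range (M + 1), (-1) ^ k * (2 * M + 1).choose (2 * k) * a k

lemma IsSecantPowerSeq.unique [CommRing R] {x : R} {a b : ℕ → R} (ha : IsSecantPowerSeq x a)
    (hb : IsSecantPowerSeq x b) : a = b := by
  funext n
  induction n using Nat.strong_induction_on with
  | _ n ih =>
    rcases n with _ | M
    · rw [ha.zero, hb.zero]
    · have lower_terms : ∑ k ∈ range M, (-1) ^ k * (2 * M + 1).choose (2 * k + 1) * a (k + 1) =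
          ∑ k ∈ range M, (-1) ^ k * (2 * M + 1).choose (2 * k + 1) * b (k + 1) :=
        sum_congr rfl fun k hk => by rw [ih (k + 1) (by grind)]
      have right_side : ∑ k ∈ range (M + 1), (-1) ^ k * (2 * M + 1).choose (2 * k) * a k =
          ∑ k ∈ range (M + 1), (-1) ^ k * (2 * M + 1).choose (2 * k) * b k :=
        sum_congr rfl fun k hk => by rw [ih k (by grind)]
      have top_terms := ha.recurrence M
      rw [right_side, ← hb.recurrence M, sum_range_succ, sum_range_succ, lower_terms] at top_terms
      exact (isUnit_neg_one.pow M).mul_left_cancel (by simpa using add_left_cancel top_terms)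

open scoped Classical in
/-- The polynomial `Apoly n`, evaluated in an arbitrary commutative semiring. -/
noncomputable def upDownPoly [CommSemiring R] (n : ℕ) (x : R) : R :=
  ∑ σ : Perm (Fin (2 * n)) with UpDown σ, x ^ mmp1 σ

/-- The set `{1, 3, …, 2k - 1}`. Counting positions from `0`, it is the descent set of a permutation
which is up-down as far as its `k`-th descent and increasing after it. -/
def oddsBelow (k : ℕ) : Set ℕ :=
  {i | Odd i ∧ i < 2 * k}

lemma oddsBelow_zero : oddsBelow 0 = ∅ := by
  simp [oddsBelow]

lemma oddsBelow_succ (k : ℕ) : oddsBelow (k + 1) = insert (2 * k + 1) (oddsBelow k) := by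
  ext i
  simp only [oddsBelow, Set.mem_ofPred_eq, Set.mem_insert_iff]
  grind

lemma upDownPoly_eq_descentPoly [CommSemiring R] (n : ℕ) (x : R) :
    upDownPoly n x = descentPoly (2 * n) {i | Odd i ∧ i + 1 < 2 * n} x := by
  classical
  refine sum_congr (filter_congr fun σ _ => upDown_iff_descents_eq) fun σ hσ => ?_
  have hσ_upDown : UpDown σ := upDown_iff_descents_eq.2 (mem_filter.1 hσ).2
  rw [hσ_upDown.mmp1_eq_card_leftToRightMinima (even_two_mul n)]

lemma upDownPoly_zero [CommSemiring R] (x : R) : upDownPoly 0 x = 1 := by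
  simpa [descentPoly_zero_empty] using upDownPoly_eq_descentPoly 0 x

lemma upDownPoly_succ [CommSemiring R] (k : ℕ) (x : R) :
    upDownPoly (k + 1) x = descentPoly (2 * k + 2) (oddsBelow k) x := by
  rw [upDownPoly_eq_descentPoly]
  congr 1
  ext i
  simp only [oddsBelow, Set.mem_ofPred_eq]
  grind

lemma sum_choose_mul_upDownPoly_succ [CommRing R] (x : R) (M : ℕ) :
    ∑ k ∈ range (M + 1), (-1) ^ k * (((2 * M + 1).choose (2 * k + 1) +
      x * (2 * M + 1).choose (2 * k + 2)) * upDownPoly (k + 1) x) = x := by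
  let d (k : ℕ) : R := descentPoly (2 * M + 2) (oddsBelow k) x
  have d_zero : d 0 = x := by simp [d, oddsBelow_zero, descentPoly_empty]
  have d_last : d (M + 1) = 0 :=
    descentPoly_eq_zero (i := 2 * M + 1) (by simp [oddsBelow_succ]) le_rfl x
  have d_add_d_succ {k : ℕ} (hk : k ≤ M) : d k + d (k + 1) =
      ((2 * M + 1).choose (2 * k + 1) + x * (2 * M + 1).choose (2 * k + 2)) *
        upDownPoly (k + 1) x := by
    rw [upDownPoly_succ, ← descentPoly_add_descentPoly_insert (by omega)
      (fun i hi => hi.2.trans (Nat.lt_succ_self _)), ← oddsBelow_succ]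
  calc
    _ = ∑ k ∈ range (M + 1), ((-1) ^ k * d k - (-1) ^ (k + 1) * d (k + 1)) :=
      sum_congr rfl fun k hk => by rw [← d_add_d_succ (by grind)]; ring
    _ = x := by rw [sum_range_sub']; simp [d_zero, d_last]

theorem isSecantPowerSeq_upDownPoly [CommRing R] (x : R) :
    IsSecantPowerSeq x fun n => upDownPoly n x where
  zero := upDownPoly_zero x
  recurrence M := by
    have even_sum : ∑ k ∈ range (M + 1), (-1) ^ k * (2 * M + 1).choose (2 * k) * upDownPoly k x =
        1 - ∑ k ∈ range (M + 1),
          (-1) ^ k * (2 * M + 1).choose (2 * k + 2) * upDownPoly (k + 1) x := by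
      rw [sum_range_succ', sum_range_succ _ M, Nat.choose_eq_zero_of_lt (Nat.lt_succ_self _)]
      simp [upDownPoly_zero, pow_succ, mul_add, sub_eq_neg_add]
    rw [even_sum, mul_sub, mul_one, eq_sub_iff_add_eq, mul_sum, ← sum_add_distrib]
    conv_rhs => rw [← sum_choose_mul_upDownPoly_succ x M]
    exact sum_congr rfl fun k _ => by ring

end Recurrence

section SecantPower

lemma cos_mem_slitPlane {z : ℂ} (hz : |z.re| < Real.pi / 2) :
    Complex.cos z ∈ Complex.slitPlane := by
  have cos_re : (Complex.cos z).re = Real.cos z.re * Real.cosh z.im := by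
    rw [Complex.cos_eq]
    simp [← Complex.ofReal_cos, ← Complex.ofReal_cosh, ← Complex.ofReal_sin,
      ← Complex.ofReal_sinh]
  exact Or.inl <| cos_re ▸
    mul_pos (Real.cos_pos_of_mem_Ioo (abs_lt.1 hz)) (Real.cosh_pos _)

/-- The function `z ↦ (sec z)ˣ`, with the principal branch of the power of `cos z`. -/
noncomputable def secantPow (x z : ℂ) : ℂ :=
  Complex.cos z ^ (-x)

lemma hasDerivAt_secantPow (x : ℂ) {z : ℂ} (hz : |z.re| < Real.pi / 2) :
    HasDerivAt (secantPow x) (-x * Complex.cos z ^ (-x - 1) * -Complex.sin z) z :=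
  (Complex.hasDerivAt_cos z).cpow_const (cos_mem_slitPlane hz)

lemma deriv_secantPow_mul_cos (x : ℂ) {z : ℂ} (hz : |z.re| < Real.pi / 2) :
    deriv (secantPow x) z * Complex.cos z = x * (secantPow x z * Complex.sin z) := by
  have hcos : Complex.cos z ≠ 0 := Complex.slitPlane_ne_zero (cos_mem_slitPlane hz)
  rw [(hasDerivAt_secantPow x hz).deriv, Complex.cpow_sub _ _ hcos, Complex.cpow_one, secantPow]
  field

lemma even_secantPow (x : ℂ) : Function.Even (secantPow x) := fun z => by
  simp [secantPow]

lemma abs_re_lt_of_mem_ball {z : ℂ} {r : ℝ} (hz : z ∈ Metric.ball 0 r) : |z.re| < r :=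
  (Complex.abs_re_le_norm z).trans_lt (mem_ball_zero_iff.1 hz)

lemma differentiableOn_secantPow (x : ℂ) :
    DifferentiableOn ℂ (secantPow x) (Metric.ball 0 (Real.pi / 2)) := fun _ hz =>
  (hasDerivAt_secantPow x (abs_re_lt_of_mem_ball hz)).differentiableAt.differentiableWithinAt

lemma sum_range_two_mul {M : Type*} [AddCommMonoid M] (f : ℕ → M) (n : ℕ) :
    ∑ i ∈ range (2 * n), f i = ∑ k ∈ range n, (f (2 * k) + f (2 * k + 1)) := by
  induction n with
  | zero => simp
  | succ n ih => rw [mul_add_one, sum_range_succ, sum_range_succ, sum_range_succ, ih, add_assoc]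

lemma iteratedDeriv_mul_two_mul_add_one {𝕜 𝔸 : Type*} [NontriviallyNormedField 𝕜] [NormedRing 𝔸]
    [NormedAlgebra 𝕜 𝔸] {f g : 𝕜 → 𝔸} {c : 𝕜} {M : ℕ} (hf : ContDiffAt 𝕜 (2 * M + 1 : ℕ) f c)
    (hg : ContDiffAt 𝕜 (2 * M + 1 : ℕ) g c) :
    iteratedDeriv (2 * M + 1) (f * g) c = ∑ k ∈ range (M + 1),
      ((2 * M + 1).choose (2 * k) * iteratedDeriv (2 * k) f c *
          iteratedDeriv (2 * (M - k) + 1) g c +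
        (2 * M + 1).choose (2 * k + 1) * iteratedDeriv (2 * k + 1) f c *
          iteratedDeriv (2 * (M - k)) g c) := by
  rw [iteratedDeriv_mul hf hg, show 2 * M + 1 + 1 = 2 * (M + 1) by ring, sum_range_two_mul]
  refine sum_congr rfl fun k hk => ?_
  have hkM : k ≤ M := mem_range_succ_iff.1 hk
  rw [show 2 * M + 1 - 2 * k = 2 * (M - k) + 1 by omega,
    show 2 * M + 1 - (2 * k + 1) = 2 * (M - k) by omega]

lemma neg_one_pow_sub {R : Type*} [Ring R] {k M : ℕ} (hk : k ≤ M) :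
    (-1 : R) ^ (M - k) = (-1) ^ M * (-1) ^ k := by
  obtain ⟨j, rfl⟩ := Nat.exists_eq_add_of_le' hk
  rw [Nat.add_sub_cancel, pow_add, mul_assoc, ← pow_add, (Even.add_self k).neg_one_pow,
    mul_one]

lemma iteratedDeriv_mul_cos_zero {g : ℂ → ℂ} {M : ℕ} (hg : ContDiffAt ℂ (2 * M + 1 : ℕ) g 0) :
    iteratedDeriv (2 * M + 1) (g * Complex.cos) 0 = (-1) ^ M * ∑ k ∈ range (M + 1),
      (-1) ^ k * (2 * M + 1).choose (2 * k + 1) * iteratedDeriv (2 * k + 1) g 0 := by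
  rw [iteratedDeriv_mul_two_mul_add_one hg Complex.contDiff_cos.contDiffAt, mul_sum]
  refine sum_congr rfl fun k hk => ?_
  have even_deriv : iteratedDeriv (2 * (M - k)) Complex.cos 0 = (-1) ^ M * (-1) ^ k := by
    simp [neg_one_pow_sub (mem_range_succ_iff.1 hk)]
  have odd_deriv : iteratedDeriv (2 * (M - k) + 1) Complex.cos 0 = 0 := by simp
  rw [even_deriv, odd_deriv]
  ring

lemma iteratedDeriv_mul_sin_zero {g : ℂ → ℂ} {M : ℕ} (hg : ContDiffAt ℂ (2 * M + 1 : ℕ) g 0) :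
    iteratedDeriv (2 * M + 1) (g * Complex.sin) 0 = (-1) ^ M * ∑ k ∈ range (M + 1),
      (-1) ^ k * (2 * M + 1).choose (2 * k) * iteratedDeriv (2 * k) g 0 := by
  rw [iteratedDeriv_mul_two_mul_add_one hg Complex.contDiff_sin.contDiffAt, mul_sum]
  refine sum_congr rfl fun k hk => ?_
  have even_deriv : iteratedDeriv (2 * (M - k)) Complex.sin 0 = 0 := by simp
  have odd_deriv : iteratedDeriv (2 * (M - k) + 1) Complex.sin 0 = (-1) ^ M * (-1) ^ k := by
    simp [neg_one_pow_sub (mem_range_succ_iff.1 hk)]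
  rw [even_deriv, odd_deriv]
  ring

theorem isSecantPowerSeq_iteratedDeriv_secantPow (x : ℂ) :
    IsSecantPowerSeq x fun n => iteratedDeriv (2 * n) (secantPow x) 0 where
  zero := by simp [secantPow]
  recurrence M := by
    have ball_mem_nhds : Metric.ball (0 : ℂ) (Real.pi / 2) ∈ nhds 0 :=
      Metric.ball_mem_nhds _ (by positivity)
    have analytic : AnalyticAt ℂ (secantPow x) 0 :=
      (differentiableOn_secantPow x).analyticAt ball_mem_nhds
    have ode : deriv (secantPow x) * Complex.cos =ᶠ[nhds 0]
        fun z => x * (secantPow x * Complex.sin) z := by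
      filter_upwards [ball_mem_nhds] with z hz
      exact deriv_secantPow_mul_cos x (abs_re_lt_of_mem_ball hz)
    have iterated_ode := ode.iteratedDeriv_eq (2 * M + 1)
    rw [iteratedDeriv_mul_cos_zero analytic.deriv.contDiffAt, iteratedDeriv_const_mul_field,
      iteratedDeriv_mul_sin_zero analytic.contDiffAt, mul_left_comm] at iterated_ode
    simp_rw [← iteratedDeriv_succ'] at iterated_ode
    exact (isUnit_neg_one.pow M).mul_left_cancel iterated_ode

lemma hasSum_taylorSeries_of_even {E : Type*} [NormedAddCommGroup E] [NormedSpace ℂ E]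
    [CompleteSpace E] {f : ℂ → E} {r : ℝ} (hf : DifferentiableOn ℂ f (Metric.ball 0 r))
    (heven : Function.Even f) {z : ℂ} (hz : z ∈ Metric.ball 0 r) :
    HasSum (fun n : ℕ => ((2 * n).factorial : ℂ)⁻¹ • z ^ (2 * n) • iteratedDeriv (2 * n) f 0)
      (f z) := by
  have odd_deriv_eq_zero {m : ℕ} (hm : Odd m) : iteratedDeriv m f 0 = 0 := by
    have h := iteratedDeriv_comp_neg m f 0
    rw [funext heven, hm.neg_one_pow, neg_zero, neg_one_smul] at h
    have := IsAddTorsionFree.of_isTorsionFree ℂ E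
    exact self_eq_neg.1 h
  have taylor := Complex.hasSum_taylorSeries_on_ball hf hz
  rw [← (mul_right_injective₀ (two_ne_zero' ℕ)).hasSum_iff] at taylor
  · simpa [Function.comp_def] using taylor
  · intro m hm
    rw [range_two_mul, Set.mem_ofPred_eq, Nat.not_even_iff_odd] at hm
    rw [odd_deriv_eq_zero hm, smul_zero, smul_zero]

lemma ofReal_cos_rpow (x : ℝ) {t : ℝ} (ht : |t| < Real.pi / 2) :
    ((Real.cos t ^ (-x) : ℝ) : ℂ) = Complex.cos t ^ (-x : ℂ) := by
  rw [Complex.ofReal_cpow (Real.cos_pos_of_mem_Ioo (abs_lt.1 ht)).le, Complex.ofReal_cos,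
    Complex.ofReal_neg]

end SecantPower

lemma ofReal_Apoly (n : ℕ) (x : ℝ) : (Apoly n x : ℂ) = upDownPoly n (x : ℂ) := by
  simp [upDownPoly, Apoly, sum_filter, apply_ite]

lemma ofReal_ite_Apoly (n : ℕ) (x t : ℝ) :
    ((if n = 0 then (1 : ℝ) else Apoly n x * t ^ (2 * n) / ((2 * n).factorial : ℝ) : ℝ) : ℂ) =
      upDownPoly n (x : ℂ) * t ^ (2 * n) / ((2 * n).factorial : ℂ) := by
  split_ifs with hn
  · simp [hn, upDownPoly_zero]
  · simp [ofReal_Apoly]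

theorem stmt2_general (x : ℂ) {z : ℂ} (hz : ‖z‖ < Real.pi / 2) :
    HasSum (fun n : ℕ => upDownPoly n x * z ^ (2 * n) / ((2 * n).factorial : ℂ))
      (Complex.cos z ^ (-x)) := by
  have coeff_eq := (isSecantPowerSeq_upDownPoly x).unique
    (isSecantPowerSeq_iteratedDeriv_secantPow x)
  have taylor := hasSum_taylorSeries_of_even (differentiableOn_secantPow x) (even_secantPow x)
    (mem_ball_zero_iff.2 hz)
  rw [← secantPow]
  convert! taylor using 2 with n
  rw [← congrFun coeff_eq n, smul_eq_mul, smul_eq_mul]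
  ring

theorem stmt2 (x t : ℝ) (ht : |t| < Real.pi / 2) :
    HasSum (fun n : ℕ => if n = 0 then (1 : ℝ)
        else Apoly n x * t ^ (2*n) / (Nat.factorial (2*n) : ℝ))
      (Real.cos t ^ (-x)) := by
  rw [← Complex.hasSum_ofReal, ofReal_cos_rpow x ht]
  simpa only [ofReal_ite_Apoly] using stmt2_general x (by simpa using ht)
end

section
/- For every real number x and every real t with |t| < π/2, the series Σ_{n≥1} B^{(1,0,∅,0)}_{2n−1}(x) · t^{2n−1}/(2n−1)! converges and its sum equals ∫_0^t (sec z)^x · (1 − x + x·sec z) dz, where sec z = 1/cos z. (Equivalently, the generating function B^{(1,0,∅,0)}(t,x) satisfies ∂B/∂t = (sec t)^x (1 − x + x sec t) with B(0,x) = 0.) -/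
open scoped Classical in
/-- `B^{(1,0,∅,0)}_{2n+1}(x) = Σ_{σ ∈ UD_{2n+1}} x^{mmp^{(1,0,∅,0)}(σ)}`. -/
noncomputable def Bpoly (n : ℕ) (x : ℝ) : ℝ :=
  ∑ σ : Equiv.Perm (Fin (2*n+1)), if UpDown σ then x ^ mmp1 σ else 0

/-!
In an up-down permutation a left-to-right minimum is never a peak, so it is followed by a larger
entry unless it comes last. The entries matching `MMP(1,0,∅,0)` are therefore the left-to-right
minima other than the last entry.

Split an alternating word at its least letter `m` as `l₁ m l₂`. If the word is up-down of length at
least `2`, this means that `l₁` is up-down of even length and `l₂` is down-up; the left-to-right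
minima of the word are then those of `l₁` together with `m`. Down-up words split likewise, with `l₁`
down-up of odd length. In terms of exponential generating functions:

* for all down-up words, `T' = 1 + T_odd T`, which `T = sec + tan` satisfies (André's theorem);
* for up-down words of even length weighted by `x` to the number of left-to-right minima,
  `E' = x E tan`, whence `E = sec ^ x`;
* for the polynomials `B`, where `m` contributes the factor `x` unless it comes last,
  `B' = E (1 - x + x sec)`.

The recursions are compared with the derivatives at `0` of these functions, which are holomorphic on
`|z| < π / 2`. The Taylor series of the last one converges there and integrates to that of `B`.
-/

open Finset Filter Topology Metric
open scoped Nat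

lemma add_eq_val_iff_exists_subset {α : Type*} [DecidableEq α] {M₁ M₂ : Multiset α}
    {s : Finset α} :
    M₁ + M₂ = s.val ↔ ∃ u ⊆ s, M₁ = u.val ∧ M₂ = (s \ u).val := by
  constructor
  · intro h
    have hle : M₁ ≤ s.val := h ▸ Multiset.le_add_right M₁ M₂
    refine ⟨⟨M₁, Multiset.nodup_of_le hle s.nodup⟩, Multiset.subset_of_le hle, rfl, ?_⟩
    exact (add_tsub_cancel_left M₁ M₂).symm.trans (congrArg (· - M₁) h)
  · rintro ⟨u, hu, rfl, rfl⟩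
    rw [sdiff_val, add_tsub_cancel_of_le (val_le_iff.2 hu)]

section Words

variable {α : Type*} [LinearOrder α]

/-- Alternating words: `Alternating true` is the class of words `a₁ < a₂ > a₃ < ⋯` and
`Alternating false` that of words `a₁ > a₂ < a₃ > ⋯`. -/
def Alternating : Bool → List α → Prop
  | _, [] => True
  | _, [_] => True
  | up, a :: b :: l => (if up then a < b else b < a) ∧ Alternating (!up) (b :: l)

lemma alternating_iff_getElem (up : Bool) (l : List α) :
    Alternating up l ↔ ∀ i, ∀ h : i + 1 < l.length,
      if Even i ↔ up then l[i] < l[i + 1] else l[i + 1] < l[i] := by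
  induction l generalizing up with
  | nil => simp [Alternating]
  | cons a l ih =>
    cases l with
    | nil => simp [Alternating]
    | cons b l =>
      have parity (i : ℕ) : (Even (i + 1) ↔ up) ↔ (Even i ↔ !up) := by
        cases up <;> simp [Nat.even_add_one]
      rw [Alternating, ih]
      constructor
      · rintro ⟨hab, hl⟩ (_ | i) h
        · simpa using hab
        · simp only [parity]
          exact hl i (by simpa using h)
      · intro H
        exact ⟨by simpa using H 0 (by simp), fun i h => by
          have := H (i + 1) (by simpa using h)
          simp only [parity] at this
          exact this⟩

lemma alternating_cons_iff_of_forall_lt (up : Bool) {m : α} {l : List α} (h : ∀ a ∈ l, m < a) :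
    Alternating up (m :: l) ↔ Alternating false l ∧ (up ∨ l = []) := by
  cases l with
  | nil => simp [Alternating]
  | cons b l =>
    have hb : m < b := h b List.mem_cons_self
    cases up <;> simp [Alternating, hb, hb.le]

lemma alternating_append_cons_iff_of_forall_lt (up : Bool) {m : α} {l₁ l₂ : List α}
    (h₁ : ∀ a ∈ l₁, m < a) (h₂ : ∀ a ∈ l₂, m < a) :
    Alternating up (l₁ ++ m :: l₂) ↔ Alternating up l₁ ∧ Alternating false l₂ ∧
      ((Even l₁.length ↔ up) ∨ l₁ ++ l₂ = []) := by
  induction l₁ generalizing up with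
  | nil => simp [alternating_cons_iff_of_forall_lt up h₂, Alternating]
  | cons a l ih =>
    obtain ⟨hma, hl⟩ := List.forall_mem_cons.1 h₁
    specialize ih (!up) hl
    cases l with
    | nil =>
      cases up <;> simp [Alternating, alternating_cons_iff_of_forall_lt _ h₂, hma, hma.le]
    | cons b l =>
      simp only [List.cons_append, Alternating] at ih ⊢
      rw [ih]
      cases up <;> simp [Nat.even_add_one] <;> tauto

/-- The alternating words whose letters are the elements of `s`, each occurring exactly once. -/
noncomputable def alternatingArrangements (up : Bool) (s : Finset α) : Finset (List α) :=
  open scoped Classical in {l ∈ s.val.lists.toFinset | Alternating up l}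

lemma mem_alternatingArrangements {up : Bool} {s : Finset α} {l : List α} :
    l ∈ alternatingArrangements up s ↔ (l : Multiset α) = s.val ∧ Alternating up l := by
  simp [alternatingArrangements, eq_comm]

lemma mem_iff_of_mem_alternatingArrangements {up : Bool} {s : Finset α} {l : List α}
    (hl : l ∈ alternatingArrangements up s) {a : α} : a ∈ l ↔ a ∈ s := by
  rw [← Multiset.mem_coe, (mem_alternatingArrangements.1 hl).1, mem_val]

@[simp]
lemma alternatingArrangements_empty (up : Bool) :
    alternatingArrangements up (∅ : Finset α) = {[]} := by
  ext l
  simp +contextual [mem_alternatingArrangements, Alternating]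

variable {m : α} {s : Finset α}

lemma append_cons_mem_alternatingArrangements_iff (hm : ∀ a ∈ s, m < a) (up : Bool)
    {l₁ l₂ : List α} :
    l₁ ++ m :: l₂ ∈ alternatingArrangements up (insert m s) ↔
      ∃ u ⊆ s, ((Even #u ↔ up) ∨ s = ∅) ∧
        l₁ ∈ alternatingArrangements up u ∧ l₂ ∈ alternatingArrangements false (s \ u) := by
  have hms : m ∉ s := fun h => (hm m h).false
  have hset : ((l₁ ++ m :: l₂ : List α) : Multiset α) = (insert m s).val ↔
      (l₁ : Multiset α) + l₂ = s.val := by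
    rw [insert_val_of_notMem hms, ← Multiset.coe_add, ← Multiset.cons_coe, Multiset.add_cons,
      Multiset.cons_inj_right]
  have halt (h : (l₁ : Multiset α) + l₂ = s.val) :
      Alternating up (l₁ ++ m :: l₂) ↔ Alternating up l₁ ∧ Alternating false l₂ ∧
        ((Even l₁.length ↔ up) ∨ s = ∅) := by
    have hmem {a : α} : a ∈ l₁ ∨ a ∈ l₂ ↔ a ∈ s := by simp [← mem_val, ← h]
    have hempty : l₁ ++ l₂ = [] ↔ s = ∅ := by simp [← val_eq_zero, ← h]
    rw [alternating_append_cons_iff_of_forall_lt up (fun a ha => hm a (hmem.1 (.inl ha)))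
      (fun a ha => hm a (hmem.1 (.inr ha))), hempty]
  simp only [mem_alternatingArrangements, hset]
  rw [and_congr_right halt, add_eq_val_iff_exists_subset]
  constructor
  · rintro ⟨⟨u, hu, h₁, h₂⟩, alt₁, alt₂, hpar⟩
    refine ⟨u, hu, ?_, ⟨h₁, alt₁⟩, h₂, alt₂⟩
    rwa [card_def, ← h₁, Multiset.coe_card]
  · rintro ⟨u, hu, hpar, ⟨h₁, alt₁⟩, h₂, alt₂⟩
    refine ⟨⟨u, hu, h₁, h₂⟩, alt₁, alt₂, ?_⟩
    rwa [card_def, ← h₁, Multiset.coe_card] at hpar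

lemma sum_alternatingArrangements_insert {M : Type*} [AddCommMonoid M]
    (hm : ∀ a ∈ s, m < a) (up : Bool) (F : List α → M) :
    ∑ l ∈ alternatingArrangements up (insert m s), F l =
      ∑ u ∈ s.powerset with (Even #u ↔ up) ∨ s = ∅,
        ∑ l₁ ∈ alternatingArrangements up u, ∑ l₂ ∈ alternatingArrangements false (s \ u),
          F (l₁ ++ m :: l₂) := by
  have hms : m ∉ s := fun h => (hm m h).false
  simp_rw [← sum_product', sum_sigma']
  symm
  refine sum_bij (fun p _ => p.2.1 ++ m :: p.2.2) ?_ ?_ ?_ fun _ _ => rfl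
  · rintro ⟨u, l₁, l₂⟩ h
    simp only [mem_sigma, mem_filter, mem_powerset, mem_product] at h
    exact (append_cons_mem_alternatingArrangements_iff hm up).2 ⟨u, h.1.1, h.1.2, h.2⟩
  · rintro ⟨u, l₁, l₂⟩ h ⟨v, k₁, k₂⟩ h' heq
    simp only [mem_sigma, mem_filter, mem_powerset, mem_product] at h h' heq
    obtain ⟨⟨hu, -⟩, hl₁, hl₂⟩ := h
    obtain ⟨-, hk₁, -⟩ := h'
    have hml₁ : m ∉ l₁ := fun h => hms (hu ((mem_iff_of_mem_alternatingArrangements hl₁).1 h))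
    have hml₂ : m ∉ l₂ := fun h =>
      hms (sdiff_subset ((mem_iff_of_mem_alternatingArrangements hl₂).1 h))
    obtain ⟨rfl, -, rfl⟩ := (List.append_cons_inj_of_notMem hml₁ hml₂).1 heq
    obtain rfl : u = v := val_injective <|
      (mem_alternatingArrangements.1 hl₁).1.symm.trans (mem_alternatingArrangements.1 hk₁).1
    rfl
  · intro l hl
    obtain ⟨l₁, l₂, rfl⟩ := List.append_of_mem
      ((mem_iff_of_mem_alternatingArrangements hl).2 (mem_insert_self m s))
    obtain ⟨u, hu, hpar, h⟩ := (append_cons_mem_alternatingArrangements_iff hm up).1 hl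
    exact ⟨⟨u, l₁, l₂⟩, by simp [hu, hpar, h], rfl⟩

end Words

section MinimumRecursion

variable {α : Type*} [LinearOrder α] {m : α} {s : Finset α}

lemma sum_alternatingArrangements_true_insert {M : Type*} [AddCommMonoid M]
    (hm : ∀ a ∈ s, m < a) (F : List α → M) :
    ∑ l ∈ alternatingArrangements true (insert m s), F l =
      ∑ u ∈ s.powerset with Even #u,
        ∑ l₁ ∈ alternatingArrangements true u, ∑ l₂ ∈ alternatingArrangements false (s \ u),
          F (l₁ ++ m :: l₂) := by
  rw [sum_alternatingArrangements_insert hm]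
  refine sum_congr (filter_congr fun u hu => ?_) fun _ _ => rfl
  have hu_empty : s = ∅ → u = ∅ := fun hs => subset_empty.1 (hs ▸ mem_powerset.1 hu)
  simp only [iff_true, or_iff_left_iff_imp]
  intro hs
  simp [hu_empty hs]

lemma card_alternatingArrangements_false_insert (hm : ∀ a ∈ s, m < a) :
    #(alternatingArrangements false (insert m s)) = (if s = ∅ then 1 else 0) +
      ∑ u ∈ s.powerset with Odd #u,
        #(alternatingArrangements false u) * #(alternatingArrangements false (s \ u)) := by
  rw [card_eq_sum_ones, sum_alternatingArrangements_insert hm]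
  rcases s.eq_empty_or_nonempty with rfl | hs
  · simp
  · simp [hs.ne_empty]

/-- The number of right-to-left minima of a word, from which `lrMinCount` is obtained by reversal:
in this direction the condition on a letter involves only the letters after it, which gives a
structural recursion. -/
def rlMinCount : List α → ℕ
  | [] => 0
  | a :: l => rlMinCount l + if ∀ b ∈ l, a < b then 1 else 0

/-- The number of left-to-right minima of a word, that is, of letters that are smaller than all
letters before them. -/
def lrMinCount (l : List α) : ℕ := rlMinCount l.reverse

@[simp]
lemma lrMinCount_nil : lrMinCount ([] : List α) = 0 := rfl

lemma lrMinCount_concat (l : List α) (a : α) :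
    lrMinCount (l ++ [a]) = lrMinCount l + if ∀ b ∈ l, a < b then 1 else 0 := by
  simp [lrMinCount, rlMinCount]

lemma lrMinCount_append_cons_of_forall_lt {l₁ l₂ : List α}
    (h₁ : ∀ a ∈ l₁, m < a) (h₂ : ∀ a ∈ l₂, m < a) :
    lrMinCount (l₁ ++ m :: l₂) = lrMinCount l₁ + 1 := by
  induction l₂ using List.reverseRecOn with
  | nil => rw [lrMinCount_concat, if_pos h₁]
  | append_singleton l a ih =>
    have hma : m < a := h₂ a (by simp)
    have hnot : ¬ ∀ b ∈ l₁ ++ m :: l, a < b := fun h => hma.not_gt (h m (by simp))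
    rw [← List.cons_append, ← List.append_assoc, lrMinCount_concat, if_neg hnot, add_zero,
      ih fun b hb => h₂ b (by simp [hb])]

lemma lrMinCount_ofFn {n : ℕ} (f : Fin n → α) :
    lrMinCount (List.ofFn f) = #{i | ∀ j < i, f i < f j} := by
  induction n with
  | zero => simp
  | succ n ih =>
    have hlast (i : Fin n) : ¬ Fin.last n < i.castSucc := (Fin.castSucc_lt_last i).not_gt
    rw [List.ofFn_succ', List.concat_eq_append, lrMinCount_concat, ih, card_filter, card_filter,
      Fin.sum_univ_castSucc]
    simp [Fin.forall_fin_succ', Fin.castSucc_lt_last, hlast]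

lemma lt_of_mem_of_mem_alternatingArrangements {up : Bool} {u : Finset α} {l : List α}
    (hm : ∀ a ∈ s, m < a) (hus : u ⊆ s) (hl : l ∈ alternatingArrangements up u) :
    ∀ a ∈ l, m < a := fun a ha => hm a (hus ((mem_iff_of_mem_alternatingArrangements hl).1 ha))

variable {R : Type*} [CommSemiring R] (x : R)

lemma sum_pow_lrMinCount_insert (hm : ∀ a ∈ s, m < a) :
    ∑ l ∈ alternatingArrangements true (insert m s), x ^ lrMinCount l =
      x * ∑ u ∈ s.powerset with Even #u,
        (∑ l ∈ alternatingArrangements true u, x ^ lrMinCount l) *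
          #(alternatingArrangements false (s \ u)) := by
  rw [sum_alternatingArrangements_true_insert hm, mul_sum]
  refine sum_congr rfl fun u hu => ?_
  have hus : u ⊆ s := mem_powerset.1 (mem_filter.1 hu).1
  rw [sum_mul, mul_sum]
  refine sum_congr rfl fun l₁ hl₁ => ?_
  have hcount (l₂) (hl₂ : l₂ ∈ alternatingArrangements false (s \ u)) :
      x ^ lrMinCount (l₁ ++ m :: l₂) = x * x ^ lrMinCount l₁ := by
    rw [lrMinCount_append_cons_of_forall_lt
      (lt_of_mem_of_mem_alternatingArrangements hm hus hl₁)
      (lt_of_mem_of_mem_alternatingArrangements hm sdiff_subset hl₂), pow_succ']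
  rw [sum_congr rfl hcount, sum_const, nsmul_eq_mul]
  ring

lemma sum_pow_lrMinCount_dropLast_insert (hm : ∀ a ∈ s, m < a) :
    ∑ l ∈ alternatingArrangements true (insert m s), x ^ lrMinCount l.dropLast =
      ∑ u ∈ s.powerset with Even #u,
        (∑ l ∈ alternatingArrangements true u, x ^ lrMinCount l) *
          ((if s \ u = ∅ then 1 else x) * #(alternatingArrangements false (s \ u))) := by
  rw [sum_alternatingArrangements_true_insert hm]
  refine sum_congr rfl fun u hu => ?_
  have hus : u ⊆ s := mem_powerset.1 (mem_filter.1 hu).1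
  rw [sum_mul]
  refine sum_congr rfl fun l₁ hl₁ => ?_
  have hcount (l₂) (hl₂ : l₂ ∈ alternatingArrangements false (s \ u)) :
      x ^ lrMinCount (l₁ ++ m :: l₂).dropLast =
        x ^ lrMinCount l₁ * if s \ u = ∅ then 1 else x := by
    have hl₂_empty : l₂ = [] ↔ s \ u = ∅ := by
      rw [← val_eq_zero, ← (mem_alternatingArrangements.1 hl₂).1, Multiset.coe_eq_zero]
    rcases eq_or_ne l₂ [] with rfl | hne
    · rw [List.dropLast_concat, if_pos (hl₂_empty.1 rfl), mul_one]
    · rw [if_neg fun h => hne (hl₂_empty.2 h), List.dropLast_append_of_ne_nil (by simp),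
        List.dropLast_cons_of_ne_nil hne, lrMinCount_append_cons_of_forall_lt
          (lt_of_mem_of_mem_alternatingArrangements hm hus hl₁)
          (fun a ha => lt_of_mem_of_mem_alternatingArrangements hm sdiff_subset hl₂ a
            (List.mem_of_mem_dropLast ha)), pow_succ]
  rw [sum_congr rfl hcount, sum_const, nsmul_eq_mul]
  ring

lemma strongInduction_insert_min {p : Finset α → Prop} (empty : p ∅)
    (insert_min : ∀ m s, (∀ a ∈ s, m < a) → (∀ u ⊆ s, p u) → p (insert m s)) (s : Finset α) :
    p s := by
  induction s using Finset.strongInduction with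
  | H s ih =>
    rcases s.eq_empty_or_nonempty with rfl | hs
    · exact empty
    · rw [← insert_erase (s.min'_mem hs)]
      exact insert_min _ _ (fun a ha => s.min'_lt_of_mem_erase_min' hs ha) fun u hu =>
        ih u (hu.trans_ssubset (erase_ssubset (s.min'_mem hs)))

end MinimumRecursion

section IteratedDeriv

lemma iteratedDeriv_succ_of_eventually_hasDerivAt {𝕜 F : Type*} [NontriviallyNormedField 𝕜]
    [NormedAddCommGroup F] [NormedSpace 𝕜 F] {f g : 𝕜 → F} {a : 𝕜}
    (h : ∀ᶠ z in 𝓝 a, HasDerivAt f (g z) z) (n : ℕ) :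
    iteratedDeriv (n + 1) f a = iteratedDeriv n g a := by
  rw [iteratedDeriv_succ']
  exact EventuallyEq.iteratedDeriv_eq n (h.mono fun z hz => hz.deriv)

lemma sum_powerset_iteratedDeriv_mul {ι 𝕜 A : Type*} [DecidableEq ι] [NontriviallyNormedField 𝕜]
    [NormedRing A] [NormedAlgebra 𝕜 A] {f g : 𝕜 → A} {a : 𝕜} (s : Finset ι)
    (hf : ContDiffAt 𝕜 #s f a) (hg : ContDiffAt 𝕜 #s g a) :
    ∑ u ∈ s.powerset, iteratedDeriv #u f a * iteratedDeriv #(s \ u) g a =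
      iteratedDeriv #s (f * g) a := by
  have hcard (u) (hu : u ∈ s.powerset) :
      iteratedDeriv #u f a * iteratedDeriv #(s \ u) g a =
        iteratedDeriv #u f a * iteratedDeriv (#s - #u) g a := by
    rw [card_sdiff_of_subset (mem_powerset.1 hu)]
  rw [sum_congr rfl hcard, iteratedDeriv_mul hf hg,
    sum_powerset_apply_card fun k => iteratedDeriv k f a * iteratedDeriv (#s - k) g a]
  simp only [nsmul_eq_mul, mul_assoc]

variable {𝕜 A : Type*} [NontriviallyNormedField 𝕜] [CharZero 𝕜] [NormedRing A]
  [NormedAlgebra 𝕜 A]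

section Parity

variable {F : Type*} [NormedAddCommGroup F] [NormedSpace 𝕜 F] {f : 𝕜 → F} {n : ℕ}

lemma iteratedDeriv_zero_eq_zero_of_even (hf : f.Even) (hn : Odd n) :
    iteratedDeriv n f 0 = 0 := by
  have h := iteratedDeriv_comp_neg n f 0
  simp only [hf.eq, hn.neg_one_pow, neg_zero, neg_smul, one_smul] at h
  have := IsAddTorsionFree.of_isTorsionFree 𝕜 F
  exact self_eq_neg.1 h

lemma iteratedDeriv_zero_eq_zero_of_odd (hf : f.Odd) (hn : Even n) :
    iteratedDeriv n f 0 = 0 := by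
  have h := iteratedDeriv_comp_neg n f 0
  simp only [hf.eq, hn.neg_one_pow, neg_zero, one_smul, iteratedDeriv_fun_neg] at h
  have := IsAddTorsionFree.of_isTorsionFree 𝕜 F
  exact self_eq_neg.1 h.symm

end Parity

variable {ι : Type*} [DecidableEq ι] {f g : 𝕜 → A} {s : Finset ι}

lemma sum_powerset_even_iteratedDeriv_mul (hf_even : f.Even) (hf : ContDiffAt 𝕜 #s f 0)
    (hg : ContDiffAt 𝕜 #s g 0) :
    ∑ u ∈ s.powerset with Even #u, iteratedDeriv #u f 0 * iteratedDeriv #(s \ u) g 0 =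
      iteratedDeriv #s (f * g) 0 := by
  rw [← sum_powerset_iteratedDeriv_mul s hf hg]
  refine sum_filter_of_ne fun u _ hne => ?_
  by_contra hu
  rw [iteratedDeriv_zero_eq_zero_of_even hf_even (Nat.not_even_iff_odd.1 hu), zero_mul] at hne
  exact hne rfl

lemma sum_powerset_odd_iteratedDeriv_mul (hf_odd : f.Odd) (hf : ContDiffAt 𝕜 #s f 0)
    (hg : ContDiffAt 𝕜 #s g 0) :
    ∑ u ∈ s.powerset with Odd #u, iteratedDeriv #u f 0 * iteratedDeriv #(s \ u) g 0 =
      iteratedDeriv #s (f * g) 0 := by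
  rw [← sum_powerset_iteratedDeriv_mul s hf hg]
  refine sum_filter_of_ne fun u _ hne => ?_
  by_contra hu
  rw [iteratedDeriv_zero_eq_zero_of_odd hf_odd (Nat.not_odd_iff_even.1 hu), zero_mul] at hne
  exact hne rfl

end IteratedDeriv

section Secant

open Complex

/-- The power `(sec z)^x` for complex `x` and `z`. It is encoded as the principal value of
`(cos z) ^ (-x)`, which is holomorphic on the strip `|re z| < π / 2`. -/
noncomputable def secPow (x z : ℂ) : ℂ := cos z ^ (-x)

@[simp]
lemma secPow_apply_zero (x : ℂ) : secPow x 0 = 1 := by simp [secPow]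

lemma secPow_even (x : ℂ) : (secPow x).Even := fun z => by simp [secPow]

variable {z : ℂ}

lemma cos_mem_slitPlane_of_abs_re_lt (hz : |z.re| < Real.pi / 2) : cos z ∈ slitPlane := by
  refine mem_slitPlane_iff.2 (.inl ?_)
  have hre : (cos z).re = Real.cos z.re * Real.cosh z.im := by
    rw [cos_eq]
    simp [cos_ofReal_re, cosh_ofReal_re, sin_ofReal_re]
  rw [hre]
  exact mul_pos (Real.cos_pos_of_mem_Ioo (abs_lt.1 hz)) (Real.cosh_pos _)

lemma eventually_abs_re_lt_pi_div_two : ∀ᶠ z : ℂ in 𝓝 0, |z.re| < Real.pi / 2 :=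
  continuous_re.abs.continuousAt.eventually_lt_const (by simpa using Real.pi_div_two_pos)

lemma hasDerivAt_secPow (x : ℂ) (hz : |z.re| < Real.pi / 2) :
    HasDerivAt (secPow x) (x * (secPow x z * tan z)) z := by
  have hcos := cos_mem_slitPlane_of_abs_re_lt hz
  refine ((hasDerivAt_cos z).cpow_const hcos).congr_deriv ?_
  rw [cpow_sub _ _ (slitPlane_ne_zero hcos), cpow_one, secPow, tan]
  ring

lemma differentiableOn_secPow (x : ℂ) :
    DifferentiableOn ℂ (secPow x) (ball 0 (Real.pi / 2)) := fun z hz =>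
  (hasDerivAt_secPow x ((abs_re_le_norm z).trans_lt
    (mem_ball_zero_iff.1 hz))).differentiableAt.differentiableWithinAt

lemma contDiffAt_secPow_zero (x : ℂ) (n : ℕ) : ContDiffAt ℂ n (secPow x) 0 :=
  ((differentiableOn_secPow x).analyticAt
    (ball_mem_nhds 0 Real.pi_div_two_pos)).contDiffAt

lemma contDiffAt_tan_zero (n : ℕ) : ContDiffAt ℂ n tan 0 := contDiffAt_tan.2 (by simp)

lemma hasDerivAt_secPow_one_add_tan (hz : |z.re| < Real.pi / 2) :
    HasDerivAt (secPow 1 + tan) (1 + tan z * (secPow 1 z + tan z)) z := by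
  have hcos := slitPlane_ne_zero (cos_mem_slitPlane_of_abs_re_lt hz)
  refine ((hasDerivAt_secPow 1 hz).add (hasDerivAt_tan hcos)).congr_deriv ?_
  rw [tan_eq_sin_div_cos]
  field_simp
  linear_combination -cos_sq_add_sin_sq z

lemma secPow_ofReal (x : ℝ) {z : ℝ} (hz : |z| < Real.pi / 2) :
    secPow x z = ((Real.cos z)⁻¹ ^ x : ℝ) := by
  have hcos := (Real.cos_pos_of_mem_Ioo (abs_lt.1 hz)).le
  rw [secPow, Real.inv_rpow hcos, ← Real.rpow_neg hcos, ofReal_cpow hcos]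
  push_cast
  rfl

/-- The function `(sec z)^x (1 - x + x sec z)`, the derivative in `z` of the exponential generating
function of the values `Bpoly n x`. -/
noncomputable def secIntegrand (x z : ℂ) : ℂ := secPow x z * (1 - x + x * secPow 1 z)

lemma secIntegrand_even (x : ℂ) : (secIntegrand x).Even := fun z => by
  simp only [secIntegrand, (secPow_even _).eq]

lemma differentiableOn_secIntegrand (x : ℂ) :
    DifferentiableOn ℂ (secIntegrand x) (ball 0 (Real.pi / 2)) :=
  (differentiableOn_secPow x).mul (((differentiableOn_secPow 1).const_mul x).const_add _)

lemma secIntegrand_ofReal (x : ℝ) {z : ℝ} (hz : |z| < Real.pi / 2) :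
    secIntegrand x z = ((Real.cos z)⁻¹ ^ x * (1 - x + x * (Real.cos z)⁻¹) : ℝ) := by
  have h_one := secPow_ofReal 1 hz
  rw [ofReal_one, Real.rpow_one] at h_one
  rw [secIntegrand, secPow_ofReal x hz, h_one]
  push_cast
  rfl

end Secant

section ExponentialGeneratingFunctions

open Complex

variable {α : Type*} [LinearOrder α] {m : α} {s : Finset α}

lemma iteratedDeriv_secPow_one_add_tan_of_even {n : ℕ} (hn : Even n) :
    iteratedDeriv n (secPow 1 + tan) 0 = iteratedDeriv n (secPow 1) 0 := by
  rw [iteratedDeriv_add (contDiffAt_secPow_zero 1 n) (contDiffAt_tan_zero n),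
    iteratedDeriv_zero_eq_zero_of_odd tan_neg hn, add_zero]

lemma iteratedDeriv_secPow_one_add_tan_of_odd {n : ℕ} (hn : Odd n) :
    iteratedDeriv n (secPow 1 + tan) 0 = iteratedDeriv n tan 0 := by
  rw [iteratedDeriv_add (contDiffAt_secPow_zero 1 n) (contDiffAt_tan_zero n),
    iteratedDeriv_zero_eq_zero_of_even (secPow_even 1) hn, zero_add]

theorem card_alternatingArrangements_false (s : Finset α) :
    (#(alternatingArrangements false s) : ℂ) = iteratedDeriv #s (secPow 1 + tan) 0 := by
  induction s using strongInduction_insert_min with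
  | empty => simp
  | insert_min m s hm ih =>
    have htan := contDiffAt_tan_zero #s
    have hadd : ContDiffAt ℂ #s (secPow 1 + tan) 0 := (contDiffAt_secPow_zero 1 #s).add htan
    have hderiv : iteratedDeriv (#s + 1) (secPow 1 + tan) 0 =
        (if s = ∅ then 1 else 0) + iteratedDeriv #s (tan * (secPow 1 + tan)) 0 := by
      rw [iteratedDeriv_succ_of_eventually_hasDerivAt
        (eventually_abs_re_lt_pi_div_two.mono fun z hz => hasDerivAt_secPow_one_add_tan hz)]
      refine (iteratedDeriv_add contDiffAt_const (htan.mul hadd)).trans ?_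
      simp only [iteratedDeriv_const, card_eq_zero]
      rfl
    rw [card_alternatingArrangements_false_insert hm,
      card_insert_of_notMem fun h => (hm m h).false, hderiv,
      ← sum_powerset_odd_iteratedDeriv_mul tan_neg htan hadd]
    push_cast
    congr 1
    refine sum_congr rfl fun u hu => ?_
    obtain ⟨hus, hu_odd⟩ := mem_filter.1 hu
    rw [ih u (mem_powerset.1 hus), ih (s \ u) sdiff_subset,
      iteratedDeriv_secPow_one_add_tan_of_odd hu_odd]

theorem sum_pow_lrMinCount_of_even (x : ℂ) (hs : Even #s) :
    ∑ l ∈ alternatingArrangements true s, x ^ lrMinCount l = iteratedDeriv #s (secPow x) 0 := by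
  induction s using strongInduction_insert_min with
  | empty => simp
  | insert_min m s hm ih =>
    rw [card_insert_of_notMem fun h => (hm m h).false] at hs ⊢
    have hs_odd : Odd #s := Nat.not_even_iff_odd.1 (Nat.even_add_one.1 hs)
    have hderiv : iteratedDeriv (#s + 1) (secPow x) 0 =
        x * iteratedDeriv #s (secPow x * tan) 0 := by
      rw [iteratedDeriv_succ_of_eventually_hasDerivAt
        (eventually_abs_re_lt_pi_div_two.mono fun z hz => hasDerivAt_secPow x hz)]
      exact iteratedDeriv_const_mul_field x _
    rw [sum_pow_lrMinCount_insert x hm, hderiv, ← sum_powerset_even_iteratedDeriv_mul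
      (secPow_even x) (contDiffAt_secPow_zero x _) (contDiffAt_tan_zero _)]
    congr 1
    refine sum_congr rfl fun u hu => ?_
    obtain ⟨hus, hu_even⟩ := mem_filter.1 hu
    rw [mem_powerset] at hus
    have hsdiff_odd : Odd #(s \ u) := by
      rw [card_sdiff_of_subset hus]
      exact Nat.Odd.sub_even (card_le_card hus) hs_odd hu_even
    rw [ih u hus hu_even, card_alternatingArrangements_false,
      iteratedDeriv_secPow_one_add_tan_of_odd hsdiff_odd]

theorem sum_pow_lrMinCount_dropLast_insert_of_even (x : ℂ) (hm : ∀ a ∈ s, m < a)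
    (hs : Even #s) :
    ∑ l ∈ alternatingArrangements true (insert m s), x ^ lrMinCount l.dropLast =
      iteratedDeriv #s (secIntegrand x) 0 := by
  have hfactor (n : ℕ) : ContDiffAt ℂ n (fun z => x * secPow 1 z) 0 :=
    contDiffAt_const.mul (contDiffAt_secPow_zero 1 n)
  rw [sum_pow_lrMinCount_dropLast_insert x hm]
  refine .trans ?_ (sum_powerset_even_iteratedDeriv_mul (secPow_even x)
    (contDiffAt_secPow_zero x _) (contDiffAt_const.add (hfactor _)))
  refine sum_congr rfl fun u hu => ?_
  obtain ⟨hus, hu_even⟩ := mem_filter.1 hu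
  rw [mem_powerset] at hus
  have hsdiff_even : Even #(s \ u) := by
    rw [card_sdiff_of_subset hus]
    exact hs.tsub hu_even
  rw [sum_pow_lrMinCount_of_even x hu_even, card_alternatingArrangements_false,
    iteratedDeriv_secPow_one_add_tan_of_even hsdiff_even,
    iteratedDeriv_fun_add contDiffAt_const (hfactor _), iteratedDeriv_const,
    iteratedDeriv_const_mul_field]
  rcases (s \ u).eq_empty_or_nonempty with h_empty | h_nonempty
  · simp [h_empty]
  · rw [if_neg h_nonempty.ne_empty, if_neg h_nonempty.card_ne_zero, zero_add]

end ExponentialGeneratingFunctions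

section TaylorIntegral

open Complex

lemma hasSum_iteratedDeriv_intervalIntegral {g : ℂ → ℂ} {r t : ℝ}
    (hg : DifferentiableOn ℂ g (ball 0 r)) (ht : |t| < r) :
    HasSum (fun n : ℕ => iteratedDeriv n g 0 * t ^ (n + 1) / (n + 1)!) (∫ z in 0..t, g z) := by
  obtain ⟨G, hG_zero, hG⟩ := hg.isExactOn_ball.with_val_at 0 0
  have hG_diff : DifferentiableOn ℂ G (ball 0 r) := fun z hz =>
    (hG z hz).differentiableAt.differentiableWithinAt
  have hball : ball (0 : ℂ) r ∈ 𝓝 0 := ball_mem_nhds 0 ((abs_nonneg t).trans_lt ht)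
  have hmem (z : ℝ) (hz : z ∈ Set.uIcc 0 t) : (z : ℂ) ∈ ball 0 r := by
    have := Set.abs_sub_left_of_mem_uIcc hz
    simp only [sub_zero] at this
    simpa using this.trans_lt ht
  have hintegral : ∫ z in 0..t, g z = G t := by
    have hcont : ContinuousOn (fun z : ℝ => g z) (Set.uIcc 0 t) :=
      hg.continuousOn.comp continuous_ofReal.continuousOn hmem
    rw [intervalIntegral.integral_eq_sub_of_hasDerivAt
      (fun z hz => (hG z (hmem z hz)).comp_ofReal) hcont.intervalIntegrable,
      ofReal_zero, hG_zero, sub_zero]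
  have hsum := hasSum_taylorSeries_on_ball hG_diff (hmem t Set.right_mem_uIcc)
  rw [← hasSum_nat_add_iff' 1] at hsum
  simp only [range_one, sum_singleton, iteratedDeriv_zero, hG_zero, smul_zero, sub_zero] at hsum
  rw [hintegral]
  refine hsum.congr_fun fun n => ?_
  rw [iteratedDeriv_succ_of_eventually_hasDerivAt (eventually_of_mem hball hG)]
  simp only [smul_eq_mul]
  ring

lemma hasSum_iteratedDeriv_intervalIntegral_of_even {g : ℂ → ℂ} {r t : ℝ} (hg_even : g.Even)
    (hg : DifferentiableOn ℂ g (ball 0 r)) (ht : |t| < r) :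
    HasSum (fun n : ℕ => iteratedDeriv (2 * n) g 0 * t ^ (2 * n + 1) / (2 * n + 1)!)
      (∫ z in 0..t, g z) := by
  have hinj : Function.Injective (2 * · : ℕ → ℕ) := mul_right_injective₀ two_ne_zero
  refine (hinj.hasSum_iff fun n hn => ?_).2 (hasSum_iteratedDeriv_intervalIntegral hg ht)
  have hn_odd : Odd n := Nat.not_even_iff_odd.1 fun h => hn (h.two_dvd.imp fun k hk => hk.symm)
  simp only [iteratedDeriv_zero_eq_zero_of_even hg_even hn_odd, zero_mul, zero_div]

end TaylorIntegral

section Permutations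

variable {n : ℕ}

lemma upDown_iff_alternating_ofFn (σ : Equiv.Perm (Fin n)) :
    UpDown σ ↔ Alternating true (List.ofFn σ) := by
  simp only [UpDown, alternating_iff_getElem, List.length_ofFn, List.getElem_ofFn, iff_true]
  exact ⟨fun h i hi => h ⟨i, Nat.lt_of_succ_lt hi⟩ hi, fun h i hi => h i hi⟩

lemma sum_upDown_eq_sum_alternatingArrangements {M : Type*} [AddCommMonoid M]
    [DecidablePred (UpDown (n := n))] (F : List (Fin n) → M) :
    ∑ σ : Equiv.Perm (Fin n) with UpDown σ, F (List.ofFn σ) =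
      ∑ l ∈ alternatingArrangements true univ, F l := by
  refine sum_bij (fun σ _ => List.ofFn σ) (fun σ hσ => ?_) (fun σ _ τ _ h => ?_) (fun l hl => ?_)
    fun _ _ => rfl
  · refine mem_alternatingArrangements.2
      ⟨?_, (upDown_iff_alternating_ofFn σ).1 (mem_filter.1 hσ).2⟩
    have hnodup := Multiset.coe_nodup.2 (List.nodup_ofFn_ofInjective σ.injective)
    refine (hnodup.ext univ.nodup).2 fun a => ?_
    simpa using σ.surjective a
  · exact DFunLike.coe_injective (List.ofFn_injective h)
  · obtain ⟨hperm, halt⟩ := mem_alternatingArrangements.1 hl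
    have hnodup : l.Nodup := Multiset.coe_nodup.1 (hperm ▸ univ.nodup)
    have hmem (a : Fin n) : a ∈ l := (mem_iff_of_mem_alternatingArrangements hl).2 (mem_univ a)
    have hlength : l.length = n := by simpa using congrArg Multiset.card hperm
    let σ := (finCongr hlength.symm).trans (hnodup.getEquivOfForallMemList l hmem)
    have hσ : List.ofFn σ = l := List.ext_getElem (by simp [hlength]) (by simp [σ])
    exact ⟨σ, by simp [upDown_iff_alternating_ofFn, hσ, halt], hσ⟩

lemma UpDown.matches1_iff {σ : Equiv.Perm (Fin n)} (hσ : UpDown σ) (i : Fin n) :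
    Matches1 σ i ↔ i.val + 1 < n ∧ ∀ j < i, σ i < σ j := by
  have hmin : (¬ ∃ j, j < i ∧ σ j < σ i) ↔ ∀ j < i, σ i < σ j := by
    simp only [not_exists, not_and, not_lt]
    refine forall₂_congr fun j hj => ?_
    exact ⟨fun h => h.lt_of_ne (σ.injective.ne hj.ne'), le_of_lt⟩
  rw [Matches1, hmin]
  refine and_congr_left fun hi_min => ⟨?_, fun hi => ?_⟩
  · rintro ⟨j, hij, -⟩
    exact (Nat.succ_le_of_lt hij).trans_lt j.isLt
  · -- A peak is preceded by a smaller entry, so a left-to-right minimum is never a peak.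
    have hi_even : Even i.val := by
      by_contra hi_odd
      obtain ⟨k, hk⟩ := Nat.not_even_iff_odd.1 hi_odd
      have hasc := hσ ⟨2 * k, by omega⟩ (show 2 * k + 1 < n by omega)
      rw [if_pos (even_two_mul k)] at hasc
      have hi_eq : (⟨2 * k + 1, by omega⟩ : Fin n) = i := Fin.ext hk.symm
      rw [hi_eq] at hasc
      exact hasc.asymm (hi_min ⟨2 * k, by omega⟩ (Fin.lt_def.2 (show 2 * k < i.val by omega)))
    have hasc := hσ i hi
    rw [if_pos hi_even] at hasc
    exact ⟨⟨i + 1, hi⟩, Fin.lt_def.2 (Nat.lt_succ_self i), hasc⟩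

lemma UpDown.mmp1_eq_lrMinCount {σ : Equiv.Perm (Fin (n + 1))} (hσ : UpDown σ) :
    mmp1 σ = lrMinCount (List.ofFn σ).dropLast := by
  rw [List.ofFn_succ', List.concat_eq_append, List.dropLast_concat, lrMinCount_ofFn, mmp1]
  simp only [hσ.matches1_iff]
  rw [Set.ncard_eq_toFinset_card', Set.toFinset_ofPred, card_filter, card_filter,
    Fin.sum_univ_castSucc]
  simp [Fin.forall_fin_succ', fun i : Fin n => (Fin.castSucc_lt_last i).not_gt]

lemma Bpoly_eq_sum_alternatingArrangements (n : ℕ) (x : ℝ) :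
    Bpoly n x = ∑ l ∈ alternatingArrangements true (univ : Finset (Fin (2 * n + 1))),
      x ^ lrMinCount l.dropLast := by
  classical
  rw [Bpoly, ← sum_filter, ← sum_upDown_eq_sum_alternatingArrangements]
  refine sum_congr (by congr) fun σ hσ => ?_
  rw [(mem_filter.1 hσ).2.mmp1_eq_lrMinCount]

theorem ofReal_Bpoly (n : ℕ) (x : ℝ) :
    (Bpoly n x : ℂ) = iteratedDeriv (2 * n) (secIntegrand x) 0 := by
  have huniv : insert 0 (univ.erase 0) = (univ : Finset (Fin (2 * n + 1))) :=
    insert_erase (mem_univ 0)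
  have hpos (a : Fin (2 * n + 1)) (ha : a ∈ univ.erase 0) : 0 < a :=
    Fin.pos_iff_ne_zero.2 (ne_of_mem_erase ha)
  have hcard : #(univ.erase (0 : Fin (2 * n + 1))) = 2 * n := by simp
  have h := sum_pow_lrMinCount_dropLast_insert_of_even (x : ℂ) hpos (by simp [hcard])
  rw [huniv, hcard] at h
  rw [Bpoly_eq_sum_alternatingArrangements, ← h]
  push_cast
  rfl

end Permutations

/-- `Σ_{n≥1} B^{(1,0,∅,0)}_{2n−1}(x) t^{2n−1}/(2n−1)!` converges to
`∫_0^t (sec z)^x (1 − x + x sec z) dz`. -/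
theorem stmt3 (x t : ℝ) (ht : |t| < Real.pi / 2) :
    HasSum (fun n : ℕ => Bpoly n x * t ^ (2*n+1) / (Nat.factorial (2*n+1) : ℝ))
      (∫ z in (0:ℝ)..t, ((Real.cos z)⁻¹) ^ x * (1 - x + x * (Real.cos z)⁻¹)) := by
  have hintegrand (z : ℝ) (hz : z ∈ Set.uIcc 0 t) : secIntegrand x z =
      ((Real.cos z)⁻¹ ^ x * (1 - x + x * (Real.cos z)⁻¹) : ℝ) :=
    secIntegrand_ofReal x <| by simpa using (Set.abs_sub_left_of_mem_uIcc hz).trans_lt (by simpa)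
  rw [← Complex.hasSum_ofReal, ← intervalIntegral.integral_ofReal,
    ← intervalIntegral.integral_congr hintegrand]
  refine (hasSum_iteratedDeriv_intervalIntegral_of_even (secIntegrand_even x)
    (differentiableOn_secIntegrand x) ht).congr_fun fun n => ?_
  rw [← ofReal_Bpoly]
  push_cast
  rfl
end

section
/- For every n ≥ 1: every up-down permutation σ of length 2n satisfies mmp^{(1,0,∅,0)}(σ) ≤ n, and the number of up-down permutations σ of length 2n with mmp^{(1,0,∅,0)}(σ) = n equals (2n−1)!!. (Equivalently, the highest power of x appearing in A^{(1,0,∅,0)}_{2n}(x) is x^n, with coefficient (2n−1)!!.) -/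
/-- The odd double factorial `(2n−1)!! = ∏_{i=1}^{n} (2i−1)`. -/
def oddDF (n : ℕ) : ℕ := ∏ i ∈ Finset.range n, (2*i+1)

/-- The even double factorial `(2n)!! = ∏_{i=1}^{n} 2i`. -/
def evenDF (n : ℕ) : ℕ := ∏ i ∈ Finset.range n, (2*i+2)

/-!
By up-downness an odd (0-based) position exceeds its left neighbour, so only even positions followed
by another entry can match. When all of them match, cut the permutation into consecutive pairs: each
pair is increasing and its smaller entry lies below everything before it. Such a permutation is a
perfect matching of the values whose pairs are listed by decreasing minimum. Its last pair
consists of the least value and an arbitrary other one, which gives the factor `2n - 1` of the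
recursion.
-/

/-- The permutation of length `m + 1` whose last entry is `a` and whose other entries are in the
same relative order as `τ`; it lets permutations be built up one last entry at a time. -/
def permSnoc {m : ℕ} (a : Fin (m + 1)) (τ : Equiv.Perm (Fin m)) : Equiv.Perm (Fin (m + 1)) :=
  (finSuccEquivLast.trans (Equiv.optionCongr τ)).trans (finSuccEquiv' a).symm

/-- Every entry in an even (0-based) position is the least of all entries up to and including its
right neighbour. For even length these permutations encode perfect matchings of the values; they
are the up-down permutations with the most matches. -/
def EvenPrefixMin {m : ℕ} (σ : Equiv.Perm (Fin m)) : Prop :=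
  ∀ i j : Fin m, Even i.val → j.val ≤ i.val + 1 → σ i ≤ σ j

section Bound

variable {m : ℕ} {σ : Equiv.Perm (Fin m)} {i : Fin m}

lemma ncard_setOf_even_and_succ_lt (m : ℕ) :
    {i : Fin m | Even i.val ∧ i.val + 1 < m}.ncard = m / 2 := by
  have h_range : {i : Fin m | Even i.val ∧ i.val + 1 < m} =
      Set.range fun k : Fin (m / 2) => (⟨2 * k.val, by omega⟩ : Fin m) := by
    ext i
    constructor
    · rintro ⟨⟨k, hk⟩, hi⟩
      exact ⟨⟨k, by omega⟩, Fin.ext (by simp only; omega)⟩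
    · rintro ⟨k, rfl⟩
      exact ⟨even_two_mul _, by simp only; omega⟩
  have h_inj : Function.Injective fun k : Fin (m / 2) => (⟨2 * k.val, by omega⟩ : Fin m) :=
    fun a b hab => Fin.ext (by simpa using hab)
  rw [h_range, ← Nat.card_coe_set_eq, Nat.card_range_of_injective h_inj, Nat.card_fin]

lemma UpDown.lt_succ (hσ : UpDown σ) (hi : Even i.val) (h : i.val + 1 < m) :
    σ i < σ ⟨i.val + 1, h⟩ := by
  simpa [hi] using hσ i h

lemma Matches1.succ_lt (hi : Matches1 σ i) : i.val + 1 < m := by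
  obtain ⟨⟨j, hij, -⟩, -⟩ := hi
  exact (Nat.succ_le_of_lt hij).trans_lt j.isLt

lemma UpDown.even_of_matches1 (hσ : UpDown σ) (hi : Matches1 σ i) : Even i.val := by
  by_contra hodd
  obtain ⟨k, hk⟩ := Nat.not_even_iff_odd.mp hodd
  have h_lt := hσ.lt_succ (i := ⟨2 * k, by omega⟩) (even_two_mul k) (hk ▸ i.isLt)
  simp only [← hk, Fin.eta] at h_lt
  exact hi.2 ⟨⟨2 * k, by omega⟩, by simp [Fin.lt_def, hk], h_lt⟩

lemma UpDown.setOf_matches1_subset (hσ : UpDown σ) :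
    {i | Matches1 σ i} ⊆ {i : Fin m | Even i.val ∧ i.val + 1 < m} :=
  fun _ hi => ⟨hσ.even_of_matches1 hi, hi.succ_lt⟩

lemma UpDown.mmp1_le (hσ : UpDown σ) : mmp1 σ ≤ m / 2 :=
  ncard_setOf_even_and_succ_lt m ▸ Set.ncard_le_ncard hσ.setOf_matches1_subset

lemma UpDown.mmp1_eq_iff (hσ : UpDown σ) :
    mmp1 σ = m / 2 ↔ ∀ i : Fin m, Even i.val → i.val + 1 < m → Matches1 σ i := by
  rw [mmp1, ← ncard_setOf_even_and_succ_lt]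
  constructor
  · intro h i hi hi'
    have h_eq := Set.eq_of_subset_of_ncard_le hσ.setOf_matches1_subset h.ge
    exact h_eq.ge ⟨hi, hi'⟩
  · intro h
    exact congrArg Set.ncard (hσ.setOf_matches1_subset.antisymm fun i hi => h i hi.1 hi.2)

end Bound

section Extremal

variable {m : ℕ} {σ : Equiv.Perm (Fin m)} {i : Fin m}

lemma EvenPrefixMin.lt (hσ : EvenPrefixMin σ) {j : Fin m} (hi : Even i.val)
    (hj : j.val ≤ i.val + 1) (hne : j ≠ i) : σ i < σ j :=
  (hσ i j hi hj).lt_of_ne (σ.injective.ne hne.symm)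

lemma EvenPrefixMin.upDown (hσ : EvenPrefixMin σ) : UpDown σ := by
  intro i h
  split_ifs with hi
  · exact hσ.lt hi le_rfl (by simp [Fin.ext_iff])
  · exact hσ.lt (Nat.even_add_one.mpr hi) (by simp only; omega) (by simp [Fin.ext_iff])

lemma EvenPrefixMin.matches1 (hσ : EvenPrefixMin σ) (hi : Even i.val) (h : i.val + 1 < m) :
    Matches1 σ i := by
  refine ⟨⟨⟨i.val + 1, h⟩, Nat.lt_succ_self _, hσ.upDown.lt_succ hi h⟩, ?_⟩
  rintro ⟨j, hji, hlt⟩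
  exact (hσ i j hi (Nat.le_succ_of_le hji.le)).not_gt hlt

lemma UpDown.evenPrefixMin (hm : Even m) (hσ : UpDown σ)
    (h_match : ∀ i : Fin m, Even i.val → i.val + 1 < m → Matches1 σ i) : EvenPrefixMin σ := by
  intro i j hi hj
  have h_succ : i.val + 1 < m := by grind
  rcases lt_trichotomy j i with hji | rfl | hij
  · exact not_lt.mp fun hlt => (h_match i hi h_succ).2 ⟨j, hji, hlt⟩
  · exact le_rfl
  · obtain rfl : j = ⟨i.val + 1, h_succ⟩ := Fin.ext (hj.antisymm hij)
    exact (hσ.lt_succ hi h_succ).le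

lemma upDown_and_mmp1_eq_iff_evenPrefixMin (hm : Even m) :
    UpDown σ ∧ mmp1 σ = m / 2 ↔ EvenPrefixMin σ :=
  ⟨fun ⟨hσ, h⟩ => hσ.evenPrefixMin hm (hσ.mmp1_eq_iff.mp h),
    fun hσ => ⟨hσ.upDown, hσ.upDown.mmp1_eq_iff.mpr fun _ => hσ.matches1⟩⟩

end Extremal

section Snoc

variable {m : ℕ}

@[simp]
lemma permSnoc_last (a : Fin (m + 1)) (τ : Equiv.Perm (Fin m)) :
    permSnoc a τ (Fin.last m) = a := by
  simp [permSnoc]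

@[simp]
lemma permSnoc_castSucc (a : Fin (m + 1)) (τ : Equiv.Perm (Fin m)) (i : Fin m) :
    permSnoc a τ i.castSucc = a.succAbove (τ i) := by
  simp [permSnoc]

lemma permSnoc_injective2 : Function.Injective2 (permSnoc (m := m)) := by
  intro a b τ ρ h
  obtain rfl : a = b := by simpa using DFunLike.congr_fun h (Fin.last m)
  exact ⟨rfl, Equiv.ext fun i => by simpa using DFunLike.congr_fun h i.castSucc⟩

lemma exists_permSnoc_eq (σ : Equiv.Perm (Fin (m + 1))) : ∃ a τ, permSnoc a τ = σ := by
  have h_card : Fintype.card (Fin (m + 1) × Equiv.Perm (Fin m)) =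
      Fintype.card (Equiv.Perm (Fin (m + 1))) := by
    simp [Fintype.card_perm, Nat.factorial_succ]
  have h_bij := (Fintype.bijective_iff_injective_and_card _).mpr
    ⟨(permSnoc_injective2 (m := m)).uncurry, h_card⟩
  obtain ⟨⟨a, τ⟩, h⟩ := h_bij.surjective σ
  exact ⟨a, τ, h⟩

lemma ncard_setOf_eq_mul_of_permSnoc_iff {P : Equiv.Perm (Fin (m + 1)) → Prop}
    {A : Set (Fin (m + 1))} {Q : Equiv.Perm (Fin m) → Prop}
    (h : ∀ a τ, P (permSnoc a τ) ↔ a ∈ A ∧ Q τ) :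
    {σ | P σ}.ncard = A.ncard * {τ | Q τ}.ncard := by
  have h_image : {σ | P σ} = Function.uncurry permSnoc '' (A ×ˢ {τ | Q τ}) := by
    ext σ
    obtain ⟨a, τ, rfl⟩ := exists_permSnoc_eq σ
    exact (h a τ).trans
      (permSnoc_injective2.uncurry.mem_set_image (a := (a, τ)) (s := A ×ˢ {τ | Q τ})).symm
  rw [h_image, Set.ncard_image_of_injective _ permSnoc_injective2.uncurry, Set.ncard_prod]

end Snoc

section Count

variable {m : ℕ}

lemma EvenPrefixMin.of_permSnoc {a : Fin (m + 1)} {τ : Equiv.Perm (Fin m)}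
    (h : EvenPrefixMin (permSnoc a τ)) : EvenPrefixMin τ := by
  intro i j hi hj
  simpa using h i.castSucc j.castSucc hi hj

lemma EvenPrefixMin.last_eq_zero (hm : Even m) {σ : Equiv.Perm (Fin (m + 1))}
    (hσ : EvenPrefixMin σ) : σ (Fin.last m) = 0 := by
  have h_le := hσ (Fin.last m) (σ.symm 0) hm (Nat.le_succ_of_le (Fin.le_last _))
  simpa using h_le

lemma evenPrefixMin_permSnoc_iff_of_even (hm : Even m) (a : Fin (m + 1))
    (τ : Equiv.Perm (Fin m)) :
    EvenPrefixMin (permSnoc a τ) ↔ a = 0 ∧ EvenPrefixMin τ := by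
  constructor
  · exact fun h => ⟨by simpa using h.last_eq_zero hm, h.of_permSnoc⟩
  · rintro ⟨rfl, hτ⟩ i j hi hj
    cases i using Fin.lastCases with
    | last => simp
    | cast i =>
      cases j using Fin.lastCases with
      | last => grind
      | cast j => simpa using hτ i j hi hj

lemma evenPrefixMin_permSnoc_iff_of_odd (hm : Odd m) (a : Fin (m + 1))
    (τ : Equiv.Perm (Fin m)) :
    EvenPrefixMin (permSnoc a τ) ↔ a ≠ 0 ∧ EvenPrefixMin τ := by
  obtain ⟨k, rfl⟩ := hm
  have hk : Even (2 * k) := even_two_mul k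
  constructor
  · refine fun h => ⟨?_, h.of_permSnoc⟩
    rintro rfl
    have h_le := h (Fin.last (2 * k)).castSucc (Fin.last (2 * k + 1)) hk le_rfl
    simp at h_le
  · rintro ⟨ha, hτ⟩ i j hi hj
    cases i using Fin.lastCases with
    | last => grind
    | cast i =>
      cases j using Fin.lastCases with
      | last =>
        obtain rfl : i = Fin.last (2 * k) := by grind
        simp [hτ.last_eq_zero hk, Fin.succAbove_ne_zero_zero ha]
      | cast j => simpa using hτ i j hi hj

lemma ncard_evenPrefixMin_add_two (hm : Even m) :
    {σ : Equiv.Perm (Fin (m + 2)) | EvenPrefixMin σ}.ncard =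
      (m + 1) * {τ : Equiv.Perm (Fin m) | EvenPrefixMin τ}.ncard := by
  have h_compl : ({0}ᶜ : Set (Fin (m + 2))).ncard = m + 1 := by
    rw [Set.ncard_compl, Set.ncard_singleton, Nat.card_fin, Nat.add_succ_sub_one]
  rw [ncard_setOf_eq_mul_of_permSnoc_iff (A := {0}ᶜ)
      (evenPrefixMin_permSnoc_iff_of_odd hm.add_one),
    ncard_setOf_eq_mul_of_permSnoc_iff (A := {0}) (evenPrefixMin_permSnoc_iff_of_even hm),
    h_compl, Set.ncard_singleton, one_mul]

lemma ncard_evenPrefixMin (n : ℕ) :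
    {σ : Equiv.Perm (Fin (2 * n)) | EvenPrefixMin σ}.ncard = oddDF n := by
  induction n with
  | zero =>
    have h_univ : {σ : Equiv.Perm (Fin 0) | EvenPrefixMin σ} = Set.univ :=
      Set.eq_univ_of_forall fun _ i => i.elim0
    simp [h_univ, oddDF]
  | succ n ih =>
    rw [oddDF, Finset.prod_range_succ, ← oddDF, ← ih, mul_comm _ (2 * n + 1)]
    exact ncard_evenPrefixMin_add_two (even_two_mul n)

end Count

theorem stmt11 (n : ℕ) (hn : 1 ≤ n) :
    (∀ σ : Equiv.Perm (Fin (2*n)), UpDown σ → mmp1 σ ≤ n) ∧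
    {σ : Equiv.Perm (Fin (2*n)) | UpDown σ ∧ mmp1 σ = n}.ncard = oddDF n := by
  have h_half : 2 * n / 2 = n := Nat.mul_div_cancel_left n two_pos
  refine ⟨fun σ hσ => hσ.mmp1_le.trans_eq h_half, ?_⟩
  have h_iff (σ : Equiv.Perm (Fin (2 * n))) : UpDown σ ∧ mmp1 σ = n ↔ EvenPrefixMin σ := by
    rw [← upDown_and_mmp1_eq_iff_evenPrefixMin (even_two_mul n), h_half]
  simp only [h_iff, ncard_evenPrefixMin]
end
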